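/- Let σ > 0, L > 0, ρ > 0, and let F : ℝ^d → [0,1] be an L-Lipschitz function. Define F̃(x) = E_{δ ~ N(0, σ²I)}[F(x + δ)] and assume 0 < F̃(x′) < 1 for all x′ in the closed Euclidean ball B(x, ρ). For each x′ ∈ B(x, ρ) let s₀(x′) be a solution of F̃(x′) = 1 − L · ∫_{s₀(x′)}^{s₀(x′) + 1/L} Φ_σ(s) ds. If K ≥ 0 satisfies L · (Φ_σ(s₀(x′) + 1/L) − Φ_σ(s₀(x′))) / φ(Φ⁻¹(F̃(x′))) ≤ K for every x′ ∈ B(x, ρ), then the function Φ⁻¹ ∘ F̃ is K-Lipschitz on B(x, ρ). -/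

import Mathlib

open MeasureTheory Real

/-- Density of the Gaussian measure `N(0, σ²I)` on `ℝ^d`. -/
noncomputable def gaussPDFd (d : ℕ) (σ : ℝ) (δ : EuclideanSpace ℝ (Fin d)) : ℝ :=
  (2 * π * σ ^ 2) ^ (-(d : ℝ) / 2) * Real.exp (-‖δ‖ ^ 2 / (2 * σ ^ 2))

/-- Gaussian smoothing: `F̃ x = E_{δ ~ N(0, σ²I)} [F (x + δ)]`. -/
noncomputable def smoothed (d : ℕ) (σ : ℝ) (F : EuclideanSpace ℝ (Fin d) → ℝ)
    (x : EuclideanSpace ℝ (Fin d)) : ℝ :=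
  ∫ δ, F (x + δ) * gaussPDFd d σ δ

/-- Density of the one-dimensional Gaussian distribution `N(0, σ²)`. -/
noncomputable def gaussPDF1 (σ t : ℝ) : ℝ :=
  (Real.sqrt (2 * π * σ ^ 2))⁻¹ * Real.exp (-t ^ 2 / (2 * σ ^ 2))

/-- Cumulative distribution function `Φ_σ` of `N(0, σ²)`. -/
noncomputable def gaussCDF1 (σ x : ℝ) : ℝ := ∫ t in Set.Iic x, gaussPDF1 σ t

/-- Standard normal density `φ`. -/
noncomputable def stdGaussPDF (t : ℝ) : ℝ := gaussPDF1 1 t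

/-- Standard normal cumulative distribution function `Φ`. -/
noncomputable def stdGaussCDF (x : ℝ) : ℝ := gaussCDF1 1 x

/-- Standard normal quantile function `Φ⁻¹`. -/
noncomputable def stdGaussQuantile : ℝ → ℝ := Function.invFun stdGaussCDF

/-!
Let `G s` be the mean under `N(0, σ²)` of the ramp that climbs with slope `L` from `0` at `s` to `1`
at `s + 1 / L`. By the layer-cake formula, `G s = 1 - L ∫_s^{s + 1/L} Φ_σ`, so `s₀` is defined by
`F̃ = G ∘ s₀`.

Along a line, averaging `F` over the orthogonal directions turns `F̃` into the one-dimensional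
smoothing of an `L`-Lipschitz profile `g` with values in `[0, 1]`. Such a `g` lies above a ramp up
to some point and below it afterwards, while translating by `h ≥ 0` reweights the Gaussian by an
increasing density (Cameron–Martin). Hence `F̃ x ≤ G s` implies `F̃ y ≤ G (s - ‖y - x‖)`, and since
`G` is strictly decreasing, `s₀` is `1`-Lipschitz. The bound defining `K` says exactly that
`|(Φ⁻¹ ∘ G)'| ≤ K` on the interval of values of `s₀`, and `Φ⁻¹ ∘ F̃ = (Φ⁻¹ ∘ G) ∘ s₀`.
-/

section

open ProbabilityTheory Set Filter
open scoped NNReal RealInnerProductSpace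

theorem mem_Ioo_of_strictMono_of_mem_Icc {α β : Type*} [Preorder α] [NoMinOrder α] [NoMaxOrder α]
    [Preorder β] {f : α → β} {a b : β} (hf : StrictMono f) (hab : ∀ x, f x ∈ Icc a b) (x : α) :
    f x ∈ Ioo a b := by
  obtain ⟨y, hy⟩ := exists_lt x
  obtain ⟨z, hz⟩ := exists_gt x
  exact ⟨(hab y).1.trans_lt (hf hy), (hf hz).trans_le (hab z).2⟩

theorem lipschitzWith_integral {X α E : Type*} [PseudoMetricSpace X] [MeasurableSpace α]
    [NormedAddCommGroup E] [NormedSpace ℝ E] {μ : Measure α} [IsProbabilityMeasure μ] {K : ℝ≥0}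
    {f : X → α → E} (hf : ∀ a, LipschitzWith K (f · a)) (hint : ∀ x, Integrable (f x) μ) :
    LipschitzWith K (fun x ↦ ∫ a, f x a ∂μ) := by
  refine LipschitzWith.of_dist_le_mul fun x y ↦ ?_
  rw [dist_eq_norm, ← integral_sub (hint x) (hint y)]
  have hbound : ∀ a, ‖f x a - f y a‖ ≤ K * dist x y := fun a ↦
    dist_eq_norm (f x a) (f y a) ▸ (hf a).dist_le_mul x y
  simpa using norm_integral_le_of_norm_le_const (μ := μ) (.of_forall hbound)

theorem integral_mul_le_of_monotone_of_sign_change {α : Type*} [LinearOrder α] [MeasurableSpace α]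
    {μ : Measure α} {w D : α → ℝ} {c : α} (hw : Monotone w) (hD_nonneg : ∀ t ≤ c, 0 ≤ D t)
    (hD_nonpos : ∀ t, c ≤ t → D t ≤ 0) (hD : Integrable D μ)
    (hwD : Integrable (fun t ↦ w t * D t) μ) :
    ∫ t, w t * D t ∂μ ≤ w c * ∫ t, D t ∂μ := by
  rw [← integral_const_mul]
  refine integral_mono hwD (hD.const_mul _) fun t ↦ ?_
  rcases le_total t c with h | h
  · exact mul_le_mul_of_nonneg_right (hw h) (hD_nonneg t h)
  · exact mul_le_mul_of_nonpos_right (hw h) (hD_nonpos t h)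

/-- The centered normal distribution `N(0, σ²)` on the line, as a Mathlib measure; it depends on
`σ` only through `σ²`, as `gaussPDF1` does. -/
noncomputable abbrev centeredGaussian (σ : ℝ) : Measure ℝ := gaussianReal 0 (σ ^ 2).toNNReal

/-- The isotropic normal distribution `N(0, σ²I)` on a Euclidean space `E`, encoded as the law of
`σ • Z` with `Z` standard Gaussian. -/
noncomputable def isotropicGaussian (E : Type*) [NormedAddCommGroup E] [InnerProductSpace ℝ E]
    [FiniteDimensional ℝ E] [MeasurableSpace E] (σ : ℝ) : Measure E :=
  (stdGaussian E).map (σ • ·)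

section IsotropicGaussian

variable {E : Type*} [NormedAddCommGroup E] [InnerProductSpace ℝ E] [FiniteDimensional ℝ E]
  [MeasurableSpace E] [BorelSpace E]

instance isProbabilityMeasure_isotropicGaussian (σ : ℝ) :
    IsProbabilityMeasure (isotropicGaussian E σ) :=
  Measure.isProbabilityMeasure_map (by fun_prop)

theorem charFun_isotropicGaussian (σ : ℝ) (w : E) :
    charFun (isotropicGaussian E σ) w = Complex.exp (-(σ ^ 2 * ‖w‖ ^ 2 / 2 : ℝ)) := by
  rw [isotropicGaussian, charFun_map_smul, charFun_stdGaussian, norm_smul, Real.norm_eq_abs,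
    Complex.ofReal_mul, mul_pow, ← Complex.ofReal_pow, sq_abs]
  push_cast
  ring_nf

theorem charFun_centeredGaussian (σ t : ℝ) :
    charFun (centeredGaussian σ) t = Complex.exp (-(σ ^ 2 * t ^ 2 / 2 : ℝ)) := by
  rw [charFun_gaussianReal, Real.coe_toNNReal _ (sq_nonneg σ)]
  simp

theorem map_smul_add_orthogonal_isotropicGaussian (σ : ℝ) {v : E} (hv : ‖v‖ = 1) :
    ((centeredGaussian σ).prod (isotropicGaussian E σ)).map
      (fun p ↦ p.1 • v + (p.2 - ⟪v, p.2⟫ • v)) = isotropicGaussian E σ := by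
  have hmeas : Measurable fun p : ℝ × E ↦ p.1 • v + (p.2 - ⟪v, p.2⟫ • v) := by fun_prop
  have := Measure.isProbabilityMeasure_map
    (μ := (centeredGaussian σ).prod (isotropicGaussian E σ)) hmeas.aemeasurable
  refine Measure.ext_of_charFun (funext fun w ↦ ?_)
  have hinner (p : ℝ × E) : ⟪p.1 • v + (p.2 - ⟪v, p.2⟫ • v), w⟫ =
      ⟪p.1, ⟪v, w⟫⟫ + ⟪p.2, w - ⟪v, w⟫ • v⟫ := by
    simp only [inner_add_left, inner_sub_left, inner_sub_right, real_inner_smul_left,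
      real_inner_smul_right, real_inner_comm v p.2, Real.inner_apply]
    ring
  have hnorm : ‖w - ⟪v, w⟫ • v‖ ^ 2 = ‖w‖ ^ 2 - ⟪v, w⟫ ^ 2 := by
    rw [norm_sub_sq_real, norm_smul, hv, real_inner_smul_right, real_inner_comm, mul_one,
      Real.norm_eq_abs, sq_abs]
    ring
  rw [charFun_apply, integral_map hmeas.aemeasurable (by fun_prop)]
  simp_rw [hinner, Complex.ofReal_add, add_mul, Complex.exp_add]
  rw [integral_prod_mul (fun t : ℝ ↦ Complex.exp (⟪t, ⟪v, w⟫⟫ * Complex.I))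
      (fun y : E ↦ Complex.exp (⟪y, w - ⟪v, w⟫ • v⟫ * Complex.I)),
    ← charFun_apply, ← charFun_apply, charFun_centeredGaussian, charFun_isotropicGaussian,
    charFun_isotropicGaussian, hnorm, ← Complex.exp_add]
  push_cast
  ring_nf

end IsotropicGaussian

section Smoothed

variable {d : ℕ} {σ : ℝ}

theorem gaussPDFd_nonneg (δ : EuclideanSpace ℝ (Fin d)) : 0 ≤ gaussPDFd d σ δ := by
  unfold gaussPDFd; positivity

theorem measurable_gaussPDFd : Measurable (gaussPDFd d σ) := by
  unfold gaussPDFd; fun_prop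

theorem integral_withDensity_gaussPDFd {E : Type*} [NormedAddCommGroup E] [NormedSpace ℝ E]
    (f : EuclideanSpace ℝ (Fin d) → E) :
    ∫ δ, f δ ∂(volume.withDensity fun δ ↦ ENNReal.ofReal (gaussPDFd d σ δ)) =
      ∫ δ, gaussPDFd d σ δ • f δ := by
  rw [integral_withDensity_eq_integral_toReal_smul measurable_gaussPDFd.ennreal_ofReal (by simp)]
  simp_rw [ENNReal.toReal_ofReal (gaussPDFd_nonneg _)]

theorem charFun_withDensity_gaussPDFd (hσ : σ ≠ 0) (w : EuclideanSpace ℝ (Fin d)) :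
    charFun (volume.withDensity fun δ ↦ ENNReal.ofReal (gaussPDFd d σ δ)) w =
      Complex.exp (-(σ ^ 2 * ‖w‖ ^ 2 / 2 : ℝ)) := by
  have hσc : (σ : ℂ) ≠ 0 := Complex.ofReal_ne_zero.2 hσ
  have hpos : 0 < 2 * π * σ ^ 2 := by positivity
  have hintegrand (δ : EuclideanSpace ℝ (Fin d)) :
      gaussPDFd d σ δ • Complex.exp (⟪δ, w⟫ * Complex.I) =
        ((2 * π * σ ^ 2) ^ (-(d : ℝ) / 2) : ℝ) *
          Complex.exp (-((2 * σ ^ 2)⁻¹ : ℝ) * ‖δ‖ ^ 2 + Complex.I * ⟪w, δ⟫) := by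
    rw [gaussPDFd, Complex.real_smul, Complex.ofReal_mul, Complex.ofReal_exp, mul_assoc,
      ← Complex.exp_add, real_inner_comm]
    push_cast
    ring_nf
  have hconst : ((2 * π * σ ^ 2) ^ (-(d : ℝ) / 2) : ℝ) *
      ((π : ℂ) / ((2 * σ ^ 2)⁻¹ : ℝ)) ^ ((d : ℂ) / 2) = 1 := by
    have hdiv : (π : ℂ) / ((2 * σ ^ 2)⁻¹ : ℝ) = (2 * π * σ ^ 2 : ℝ) := by
      push_cast; field_simp
    have hexp : (d : ℂ) / 2 = ((d / 2 : ℝ) : ℂ) := by push_cast; rfl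
    rw [hdiv, hexp, ← Complex.ofReal_cpow hpos.le, ← Complex.ofReal_mul, ← Real.rpow_add hpos,
      neg_div, neg_add_cancel, Real.rpow_zero, Complex.ofReal_one]
  rw [charFun_apply, integral_withDensity_gaussPDFd]
  simp_rw [hintegrand]
  rw [integral_const_mul, GaussianFourier.integral_cexp_neg_mul_sq_norm_add
    (by rw [Complex.ofReal_re]; positivity), finrank_euclideanSpace_fin, ← mul_assoc, hconst,
    one_mul, Complex.I_sq]
  congr 1
  push_cast
  field_simp
  norm_num

theorem withDensity_gaussPDFd (hσ : σ ≠ 0) :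
    (volume.withDensity fun δ ↦ ENNReal.ofReal (gaussPDFd d σ δ)) =
      isotropicGaussian (EuclideanSpace ℝ (Fin d)) σ := by
  set μ := volume.withDensity fun δ ↦ ENNReal.ofReal (gaussPDFd d σ δ) with hμ
  have hmass : μ.real univ = 1 := by
    have h := charFun_withDensity_gaussPDFd (d := d) hσ 0
    rw [← hμ, charFun_zero] at h
    simpa using h
  have : IsProbabilityMeasure μ := ⟨(ENNReal.toReal_eq_one_iff _).1 hmass⟩
  refine Measure.ext_of_charFun (funext fun w ↦ ?_)
  rw [charFun_withDensity_gaussPDFd hσ, charFun_isotropicGaussian]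

theorem smoothed_eq_integral_isotropicGaussian (hσ : σ ≠ 0) (F : EuclideanSpace ℝ (Fin d) → ℝ)
    (x : EuclideanSpace ℝ (Fin d)) :
    smoothed d σ F x = ∫ δ, F (x + δ) ∂isotropicGaussian (EuclideanSpace ℝ (Fin d)) σ := by
  simp_rw [smoothed, ← withDensity_gaussPDFd hσ, integral_withDensity_gaussPDFd, smul_eq_mul,
    mul_comm]

theorem exists_lipschitzWith_smoothed_add_smul (hσ : σ ≠ 0) {L : ℝ≥0}
    {F : EuclideanSpace ℝ (Fin d) → ℝ} (hF : LipschitzWith L F) (hF01 : ∀ z, F z ∈ Icc (0 : ℝ) 1)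
    (x : EuclideanSpace ℝ (Fin d)) {v : EuclideanSpace ℝ (Fin d)} (hv : ‖v‖ = 1) :
    ∃ g : ℝ → ℝ, LipschitzWith L g ∧ (∀ t, g t ∈ Icc (0 : ℝ) 1) ∧
      ∀ h : ℝ, smoothed d σ F (x + h • v) = ∫ t, g (t + h) ∂centeredGaussian σ := by
  set γ := isotropicGaussian (EuclideanSpace ℝ (Fin d)) σ
  have hFm : Measurable F := hF.continuous.measurable
  have hint (t : ℝ) : Integrable (fun δ ↦ F (x + t • v + (δ - ⟪v, δ⟫ • v))) γ :=
    .of_mem_Icc 0 1 (by fun_prop) (.of_forall fun _ ↦ hF01 _)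
  refine ⟨fun t ↦ ∫ δ, F (x + t • v + (δ - ⟪v, δ⟫ • v)) ∂γ, ?_, fun t ↦ ?_, fun h ↦ ?_⟩
  · refine lipschitzWith_integral (fun δ ↦ .of_dist_le_mul fun t t' ↦ ?_) hint
    refine (hF.dist_le_mul _ _).trans_eq ?_
    rw [dist_add_right, dist_add_left, dist_eq_norm, ← sub_smul, norm_smul, hv, mul_one,
      dist_eq_norm]
  · exact (convex_Icc 0 1).integral_mem isClosed_Icc (.of_forall fun _ ↦ hF01 _) (hint t)
  · have hF_shift : Measurable fun δ ↦ F (x + h • v + δ) := by fun_prop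
    rw [smoothed_eq_integral_isotropicGaussian hσ]
    conv_lhs => rw [← map_smul_add_orthogonal_isotropicGaussian σ hv]
    rw [integral_map (by fun_prop) hF_shift.aestronglyMeasurable,
      integral_prod _ (.of_mem_Icc 0 1 (by fun_prop) (.of_forall fun _ ↦ hF01 _))]
    congr! 5 with t δ
    module

end Smoothed

section GaussCDF

variable {σ : ℝ}

theorem toNNReal_sq_ne_zero (hσ : σ ≠ 0) : (σ ^ 2).toNNReal ≠ 0 :=
  (Real.toNNReal_pos.2 (by positivity)).ne'

theorem gaussPDF1_eq_gaussianPDFReal (σ : ℝ) :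
    gaussPDF1 σ = gaussianPDFReal 0 (σ ^ 2).toNNReal := by
  ext t
  simp [gaussPDF1, gaussianPDFReal, Real.coe_toNNReal _ (sq_nonneg σ)]

theorem gaussPDF1_pos (hσ : σ ≠ 0) (t : ℝ) : 0 < gaussPDF1 σ t := by
  unfold gaussPDF1; positivity

theorem continuous_gaussPDF1 (σ : ℝ) : Continuous (gaussPDF1 σ) := by
  unfold gaussPDF1; fun_prop

theorem gaussCDF1_eq_cdf (hσ : σ ≠ 0) : gaussCDF1 σ = cdf (centeredGaussian σ) := by
  ext s
  rw [gaussCDF1, cdf_eq_real, measureReal_def,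
    gaussianReal_apply_eq_integral _ (toNNReal_sq_ne_zero hσ), gaussPDF1_eq_gaussianPDFReal,
    ENNReal.toReal_ofReal]
  exact setIntegral_nonneg measurableSet_Iic fun t _ ↦ gaussianPDFReal_nonneg _ _ _

theorem hasStrictDerivAt_gaussCDF1 (σ s : ℝ) :
    HasStrictDerivAt (gaussCDF1 σ) (gaussPDF1 σ s) s := by
  have hint (a : ℝ) : IntegrableOn (gaussPDF1 σ) (Iic a) := by
    rw [gaussPDF1_eq_gaussianPDFReal]
    exact (integrable_gaussianPDFReal _ _).integrableOn
  have heq : gaussCDF1 σ = fun s ↦ gaussCDF1 σ 0 + ∫ t in (0 : ℝ)..s, gaussPDF1 σ t := by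
    ext s
    rw [← intervalIntegral.integral_Iic_sub_Iic (hint 0) (hint s), gaussCDF1, gaussCDF1]
    ring
  rw [heq]
  exact ((continuous_gaussPDF1 σ).integral_hasStrictDerivAt 0 s).const_add _

theorem continuous_gaussCDF1 (σ : ℝ) : Continuous (gaussCDF1 σ) :=
  continuous_iff_continuousAt.2 fun s ↦ (hasStrictDerivAt_gaussCDF1 σ s).hasDerivAt.continuousAt

theorem strictMono_gaussCDF1 (hσ : σ ≠ 0) : StrictMono (gaussCDF1 σ) :=
  strictMono_of_hasDerivAt_pos (fun s ↦ (hasStrictDerivAt_gaussCDF1 σ s).hasDerivAt)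
    (gaussPDF1_pos hσ)

end GaussCDF

section Quantile

theorem stdGaussPDF_pos (t : ℝ) : 0 < stdGaussPDF t := gaussPDF1_pos one_ne_zero t

theorem stdGaussQuantile_stdGaussCDF (a : ℝ) : stdGaussQuantile (stdGaussCDF a) = a :=
  Function.leftInverse_invFun (strictMono_gaussCDF1 one_ne_zero).injective a

theorem Ioo_subset_range_stdGaussCDF : Ioo 0 1 ⊆ range stdGaussCDF := fun p hp ↦ by
  have hcdf : stdGaussCDF = cdf (centeredGaussian 1) := gaussCDF1_eq_cdf one_ne_zero
  have hbot : ∀ᶠ a in atBot, stdGaussCDF a < p :=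
    hcdf ▸ (tendsto_cdf_atBot _).eventually_lt_const hp.1
  have htop : ∀ᶠ a in atTop, p < stdGaussCDF a :=
    hcdf ▸ (tendsto_cdf_atTop _).eventually_const_lt hp.2
  obtain ⟨a, ha⟩ := hbot.exists
  obtain ⟨b, hb⟩ := htop.exists
  exact mem_range_of_exists_le_of_exists_ge (continuous_gaussCDF1 1) ⟨a, ha.le⟩ ⟨b, hb.le⟩

theorem hasStrictDerivAt_stdGaussQuantile {p : ℝ} (hp : p ∈ Ioo (0 : ℝ) 1) :
    HasStrictDerivAt stdGaussQuantile (stdGaussPDF (stdGaussQuantile p))⁻¹ p := by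
  obtain ⟨a, rfl⟩ := Ioo_subset_range_stdGaussCDF hp
  rw [stdGaussQuantile_stdGaussCDF]
  exact (hasStrictDerivAt_gaussCDF1 1 a).to_local_left_inverse (stdGaussPDF_pos a).ne'
    (.of_forall stdGaussQuantile_stdGaussCDF)

end Quantile

/-- The extremal `L`-Lipschitz profile with values in `[0, 1]`: it vanishes up to `s` and climbs
with slope `L` until it reaches `1` at `s + 1 / L`. -/
noncomputable def ramp (L s t : ℝ) : ℝ := max 0 (min 1 (L * (t - s)))

/-- The mean of `ramp L s` under `N(0, σ²)`, which is the right-hand side of the equation defining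
`s₀` in Theorem 2. -/
noncomputable def rampMean (σ L s : ℝ) : ℝ := ∫ t, ramp L s t ∂centeredGaussian σ

section Ramp

variable {σ L : ℝ}

theorem continuous_ramp (L s : ℝ) : Continuous (ramp L s) := by unfold ramp; fun_prop

theorem ramp_mem_Icc (L s t : ℝ) : ramp L s t ∈ Icc (0 : ℝ) 1 :=
  ⟨le_max_left _ _, max_le zero_le_one (min_le_left _ _)⟩

theorem ramp_add (L s t h : ℝ) : ramp L s (t + h) = ramp L (s - h) t := by
  rw [ramp, ramp, sub_sub_eq_add_sub]

theorem integrable_ramp {μ : Measure ℝ} [IsFiniteMeasure μ] (L s : ℝ) :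
    Integrable (ramp L s) μ :=
  .of_mem_Icc 0 1 (continuous_ramp L s).aemeasurable (.of_forall (ramp_mem_Icc L s))

theorem le_ramp_iff (hL : 0 < L) {s t u : ℝ} (hu : u ∈ Ioc (0 : ℝ) 1) :
    u ≤ ramp L s t ↔ s + u / L ≤ t := by
  rw [ramp, le_max_iff, le_min_iff, ← le_sub_iff_add_le', div_le_iff₀' hL]
  simp [hu.1.not_ge, hu.2]

theorem rampMean_eq (hσ : σ ≠ 0) (hL : 0 < L) (s : ℝ) :
    rampMean σ L s = 1 - L * ∫ u in s..(s + 1 / L), gaussCDF1 σ u := by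
  have := nullSingletonClass_gaussianReal (μ := 0) (toNNReal_sq_ne_zero hσ)
  have htail (u : ℝ) : (centeredGaussian σ).real (Ici u) = 1 - gaussCDF1 σ u := by
    rw [gaussCDF1_eq_cdf hσ, cdf_eq_real, ← measureReal_congr Iio_ae_eq_Iic, ← compl_Iio,
      probReal_compl_eq_one_sub measurableSet_Iio]
  calc rampMean σ L s
    _ = ∫ u in Ioc 0 1, (centeredGaussian σ).real {t | u ≤ ramp L s t} :=
      (integrable_ramp L s).integral_eq_integral_Ioc_meas_le
        (.of_forall fun t ↦ (ramp_mem_Icc L s t).1) (.of_forall fun t ↦ (ramp_mem_Icc L s t).2)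
    _ = ∫ u in Ioc 0 1, (1 - gaussCDF1 σ (s + u / L)) := by
      refine setIntegral_congr_fun measurableSet_Ioc fun u hu ↦ ?_
      simp_rw [le_ramp_iff hL hu]
      exact htail _
    _ = 1 - ∫ u in (0 : ℝ)..1, gaussCDF1 σ (s + u / L) := by
      have hcont : Continuous fun u ↦ gaussCDF1 σ (s + u / L) :=
        (continuous_gaussCDF1 σ).comp (by fun_prop)
      rw [← intervalIntegral.integral_of_le zero_le_one, intervalIntegral.integral_sub
        intervalIntegrable_const (hcont.intervalIntegrable 0 1)]
      simp
    _ = 1 - L * ∫ u in s..(s + 1 / L), gaussCDF1 σ u := by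
      rw [intervalIntegral.integral_comp_add_div _ hL.ne', smul_eq_mul, zero_div, add_zero]

theorem hasDerivAt_rampMean (hσ : σ ≠ 0) (hL : 0 < L) (s : ℝ) :
    HasDerivAt (rampMean σ L) (-(L * (gaussCDF1 σ (s + 1 / L) - gaussCDF1 σ s))) s := by
  have hint (a b : ℝ) : IntervalIntegrable (gaussCDF1 σ) volume a b :=
    (continuous_gaussCDF1 σ).intervalIntegrable a b
  have hprim (a : ℝ) : HasDerivAt (fun s ↦ ∫ u in (0 : ℝ)..s, gaussCDF1 σ u) (gaussCDF1 σ a) a :=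
    ((continuous_gaussCDF1 σ).integral_hasStrictDerivAt 0 a).hasDerivAt
  have heq : rampMean σ L = fun s ↦
      1 - L * ((∫ u in (0 : ℝ)..(s + 1 / L), gaussCDF1 σ u) -
        ∫ u in (0 : ℝ)..s, gaussCDF1 σ u) := by
    ext s
    rw [rampMean_eq hσ hL, intervalIntegral.integral_interval_sub_left (hint _ _) (hint _ _)]
  rw [heq]
  exact ((((hprim (s + 1 / L)).comp_add_const s (1 / L)).sub (hprim s)).const_mul L).const_sub 1

theorem strictAnti_rampMean (hσ : σ ≠ 0) (hL : 0 < L) : StrictAnti (rampMean σ L) :=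
  strictAnti_of_hasDerivAt_neg (hasDerivAt_rampMean hσ hL) fun s ↦ neg_lt_zero.2 <|
    mul_pos hL <| sub_pos.2 <| strictMono_gaussCDF1 hσ <| lt_add_of_pos_right s (by positivity)

theorem rampMean_mem_Ioo (hσ : σ ≠ 0) (hL : 0 < L) (s : ℝ) : rampMean σ L s ∈ Ioo (0 : ℝ) 1 :=
  mem_Ioo_of_strictMono_of_mem_Icc (strictAnti_rampMean hσ hL).dual_left
    (fun s ↦ (convex_Icc 0 1).integral_mem isClosed_Icc (.of_forall (ramp_mem_Icc L s))
      (integrable_ramp L s)) s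

theorem hasDerivAt_stdGaussQuantile_rampMean (hσ : σ ≠ 0) (hL : 0 < L) (s : ℝ) :
    HasDerivAt (stdGaussQuantile ∘ rampMean σ L)
      (-(L * (gaussCDF1 σ (s + 1 / L) - gaussCDF1 σ s) /
        stdGaussPDF (stdGaussQuantile (rampMean σ L s)))) s := by
  rw [div_eq_inv_mul, ← mul_neg]
  exact (hasStrictDerivAt_stdGaussQuantile (rampMean_mem_Ioo hσ hL s)).hasDerivAt.comp s
    (hasDerivAt_rampMean hσ hL s)

end Ramp

section Comparison

variable {σ : ℝ} {L : ℝ≥0}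

theorem exists_ramp_le_of_le_and_le_ramp_of_ge (hL : 0 < L) {g : ℝ → ℝ} (hg : LipschitzWith L g)
    (hg01 : ∀ t, g t ∈ Icc (0 : ℝ) 1) (s : ℝ) :
    ∃ c, (∀ t ≤ c, ramp L s t ≤ g t) ∧ ∀ t, c ≤ t → g t ≤ ramp L s t := by
  have hgrowth {t t' : ℝ} (h : t ≤ t') : g t' - g t ≤ L * (t' - t) :=
    (le_abs_self _).trans <| by
      simpa [Real.dist_eq, abs_of_nonneg (sub_nonneg.2 h)] using hg.dist_le_mul t' t
  have hgc := hg.continuous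
  have hend : g (s + 1 / L) - L * (s + 1 / L - s) ≤ 0 := by
    rw [add_sub_cancel_left, mul_one_div_cancel (by positivity)]
    exact sub_nonpos.2 (hg01 _).2
  obtain ⟨c, hc⟩ : ∃ c, g c - L * (c - s) = 0 :=
    mem_range_of_exists_le_of_exists_ge (by fun_prop : Continuous fun c ↦ g c - L * (c - s))
      ⟨s + 1 / L, hend⟩ ⟨s, by simpa using (hg01 s).1⟩
  refine ⟨c, fun t ht ↦ max_le (hg01 t).1 ((min_le_right _ _).trans ?_),
    fun t ht ↦ (le_min (hg01 t).2 ?_).trans (le_max_right _ _)⟩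
  · linarith [hgrowth ht]
  · linarith [hgrowth ht]

theorem integral_comp_add_gaussianReal {E : Type*} [NormedAddCommGroup E] [NormedSpace ℝ E]
    {v : ℝ≥0} (hv : v ≠ 0) (f : ℝ → E) (h : ℝ) :
    ∫ t, f (t + h) ∂gaussianReal 0 v =
      ∫ t, Real.exp (h / v * t - h ^ 2 / (2 * v)) • f t ∂gaussianReal 0 v := by
  have hv' : (v : ℝ) ≠ 0 := NNReal.coe_ne_zero.2 hv
  have hdensity (t : ℝ) : gaussianPDFReal h v t =
      gaussianPDFReal 0 v t * Real.exp (h / v * t - h ^ 2 / (2 * v)) := by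
    rw [gaussianPDFReal, gaussianPDFReal, mul_assoc _ (Real.exp _), ← Real.exp_add]
    congr 2
    field_simp
    ring
  have hshift : ∫ t, f (t + h) ∂gaussianReal 0 v = ∫ t, f t ∂gaussianReal h v := by
    rw [← zero_add h, ← gaussianReal_map_add_const, zero_add,
      (measurableEmbedding_addRight h).integral_map]
  rw [hshift, integral_gaussianReal_eq_integral_smul hv, integral_gaussianReal_eq_integral_smul hv]
  simp_rw [hdensity, mul_smul]

theorem integral_comp_add_nonpos_of_sign_change {v : ℝ≥0} (hv : v ≠ 0) {D : ℝ → ℝ}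
    (hDm : AEStronglyMeasurable D (gaussianReal 0 v)) {C : ℝ} (hDC : ∀ t, ‖D t‖ ≤ C) {c : ℝ}
    (hD_nonneg : ∀ t ≤ c, 0 ≤ D t) (hD_nonpos : ∀ t, c ≤ t → D t ≤ 0)
    (hD0 : ∫ t, D t ∂gaussianReal 0 v ≤ 0) {h : ℝ} (hh : 0 ≤ h) :
    ∫ t, D (t + h) ∂gaussianReal 0 v ≤ 0 := by
  set w : ℝ → ℝ := fun t ↦ Real.exp (h / v * t - h ^ 2 / (2 * v)) with hw
  have hw_mono : Monotone w := fun t t' htt' ↦ by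
    simp only [hw]
    gcongr
  have hw_int : Integrable w (gaussianReal 0 v) := by
    simpa only [hw, Real.exp_sub] using (integrable_exp_mul_gaussianReal (h / v)).div_const _
  calc ∫ t, D (t + h) ∂gaussianReal 0 v
    _ = ∫ t, w t * D t ∂gaussianReal 0 v := integral_comp_add_gaussianReal hv D h
    _ ≤ w c * ∫ t, D t ∂gaussianReal 0 v :=
      integral_mul_le_of_monotone_of_sign_change hw_mono hD_nonneg hD_nonpos
        (.of_bound hDm C (.of_forall hDC)) (hw_int.mul_bdd hDm (.of_forall hDC))
    _ ≤ 0 := mul_nonpos_of_nonneg_of_nonpos (Real.exp_nonneg _) hD0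

theorem integral_comp_add_le_rampMean_sub (hσ : σ ≠ 0) (hL : 0 < L) {g : ℝ → ℝ}
    (hg : LipschitzWith L g) (hg01 : ∀ t, g t ∈ Icc (0 : ℝ) 1) {s h : ℝ} (hh : 0 ≤ h)
    (hgs : ∫ t, g t ∂centeredGaussian σ ≤ rampMean σ L s) :
    ∫ t, g (t + h) ∂centeredGaussian σ ≤ rampMean σ L (s - h) := by
  obtain ⟨c, hc_le, hc_ge⟩ := exists_ramp_le_of_le_and_le_ramp_of_ge hL hg hg01 s
  have hgc := hg.continuous
  have hrc := continuous_ramp L s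
  have hint_g (a : ℝ) : Integrable (fun t ↦ g (t + a)) (centeredGaussian σ) :=
    .of_mem_Icc 0 1 (by fun_prop) (.of_forall fun _ ↦ hg01 _)
  have hshift : rampMean σ L (s - h) = ∫ t, ramp L s (t + h) ∂centeredGaussian σ := by
    simp_rw [rampMean, ramp_add]
  have hint_ramp : Integrable (fun t ↦ ramp L s (t + h)) (centeredGaussian σ) := by
    simpa only [ramp_add] using integrable_ramp L (s - h)
  rw [hshift, ← sub_nonpos, ← integral_sub (hint_g h) hint_ramp]
  refine integral_comp_add_nonpos_of_sign_change (D := fun t ↦ g t - ramp L s t) (C := 1) (c := c)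
    (toNNReal_sq_ne_zero hσ) (by fun_prop)
    (fun t ↦ abs_sub_le_of_nonneg_of_le (hg01 t).1 (hg01 t).2 (ramp_mem_Icc L s t).1
      (ramp_mem_Icc L s t).2)
    (fun t ht ↦ sub_nonneg.2 (hc_le t ht)) (fun t ht ↦ sub_nonpos.2 (hc_ge t ht)) ?_ hh
  rw [integral_sub (by simpa using hint_g 0) (integrable_ramp L s)]
  exact sub_nonpos.2 hgs

variable {d : ℕ} {F : EuclideanSpace ℝ (Fin d) → ℝ}

theorem smoothed_le_rampMean_sub_norm (hσ : σ ≠ 0) (hL : 0 < L) (hF : LipschitzWith L F)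
    (hF01 : ∀ z, F z ∈ Icc (0 : ℝ) 1) {x y : EuclideanSpace ℝ (Fin d)} {s : ℝ}
    (hs : smoothed d σ F x ≤ rampMean σ L s) :
    smoothed d σ F y ≤ rampMean σ L (s - ‖y - x‖) := by
  rcases eq_or_ne y x with rfl | hne
  · simpa using hs
  have hpos : 0 < ‖y - x‖ := norm_sub_pos_iff.2 hne
  obtain ⟨g, hg, hg01, hsmoothed⟩ := exists_lipschitzWith_smoothed_add_smul hσ hF hF01 x
    (v := ‖y - x‖⁻¹ • (y - x)) (norm_smul_inv_norm (𝕜 := ℝ) (sub_ne_zero.2 hne))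
  have hx : smoothed d σ F x = ∫ t, g t ∂centeredGaussian σ := by simpa using hsmoothed 0
  have hy : smoothed d σ F y = ∫ t, g (t + ‖y - x‖) ∂centeredGaussian σ := by
    rw [← hsmoothed, smul_inv_smul₀ hpos.ne', add_sub_cancel]
  rw [hy]
  exact integral_comp_add_le_rampMean_sub hσ hL hg hg01 (norm_nonneg _) (hx ▸ hs)

theorem lipschitzOnWith_one_of_smoothed_eq_rampMean (hσ : σ ≠ 0) (hL : 0 < L)
    (hF : LipschitzWith L F) (hF01 : ∀ z, F z ∈ Icc (0 : ℝ) 1)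
    {S : Set (EuclideanSpace ℝ (Fin d))} {s₀ : EuclideanSpace ℝ (Fin d) → ℝ}
    (hs₀ : EqOn (smoothed d σ F) (rampMean σ L ∘ s₀) S) :
    LipschitzOnWith 1 s₀ S := by
  refine LipschitzOnWith.of_le_add fun x hx y hy ↦ ?_
  have hle : rampMean σ L (s₀ y) ≤ rampMean σ L (s₀ x - ‖y - x‖) :=
    (hs₀ hy).symm.trans_le (smoothed_le_rampMean_sub_norm hσ hL hF hF01 (hs₀ hx).le)
  rw [dist_eq_norm']
  linarith [(strictAnti_rampMean hσ hL).le_iff_ge.1 hle]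

end Comparison

theorem quantile_smoothed_locally_lipschitz_general {d : ℕ} {σ : ℝ} {L K : ℝ≥0} (hσ : σ ≠ 0)
    (hL : 0 < L) {F : EuclideanSpace ℝ (Fin d) → ℝ} (hF : LipschitzWith L F)
    (hF01 : ∀ z, F z ∈ Icc (0 : ℝ) 1) {S : Set (EuclideanSpace ℝ (Fin d))} (hS : IsPreconnected S)
    {s₀ : EuclideanSpace ℝ (Fin d) → ℝ}
    (hs₀ : ∀ x ∈ S, smoothed d σ F x = 1 - L * ∫ s in (s₀ x)..(s₀ x + 1 / L), gaussCDF1 σ s)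
    (hK : ∀ x ∈ S, L * (gaussCDF1 σ (s₀ x + 1 / L) - gaussCDF1 σ (s₀ x)) /
      stdGaussPDF (stdGaussQuantile (smoothed d σ F x)) ≤ K) :
    LipschitzOnWith K (stdGaussQuantile ∘ smoothed d σ F) S := by
  have hL' : 0 < (L : ℝ) := hL
  have hramp : EqOn (smoothed d σ F) (rampMean σ L ∘ s₀) S := fun x hx ↦
    (hs₀ x hx).trans (rampMean_eq hσ hL' _).symm
  have hs₀_lip := lipschitzOnWith_one_of_smoothed_eq_rampMean hσ hL hF hF01 hramp
  have himage : Convex ℝ (s₀ '' S) := (hS.image s₀ hs₀_lip.continuousOn).ordConnected.convex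
  have hquantile : LipschitzOnWith K (stdGaussQuantile ∘ rampMean σ L) (s₀ '' S) := by
    refine himage.lipschitzOnWith_of_nnnorm_hasDerivWithin_le
      (fun s _ ↦ (hasDerivAt_stdGaussQuantile_rampMean hσ hL' s).hasDerivWithinAt) ?_
    rintro _ ⟨x, hx, rfl⟩
    have hrise : 0 ≤ gaussCDF1 σ (s₀ x + 1 / L) - gaussCDF1 σ (s₀ x) :=
      sub_nonneg.2 <| (strictMono_gaussCDF1 hσ).monotone <| by simp
    rw [← NNReal.coe_le_coe, coe_nnnorm, norm_neg, Real.norm_of_nonneg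
      (div_nonneg (mul_nonneg hL'.le hrise) (stdGaussPDF_pos _).le)]
    simpa only [hramp hx] using! hK x hx
  have hcomp := hquantile.comp hs₀_lip (mapsTo_image s₀ S)
  rw [mul_one] at hcomp
  exact fun x hx y hy ↦ by simpa only [Function.comp_apply, hramp hx, hramp hy] using hcomp hx hy

end

/-- **Local Lipschitz bound for `Φ⁻¹ ∘ F̃` (Theorem 2).** Let `F : ℝ^d → [0,1]` be `L`-Lipschitz
with Gaussian smoothing `F̃` taking values in `(0,1)` on the closed ball `B(x, ρ)`, and for each
`x'` in the ball let `s₀ x'` solve `F̃ x' = 1 - L ∫_{s₀ x'}^{s₀ x' + 1/L} Φ_σ(s) ds`. If `K ≥ 0`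
dominates `L (Φ_σ(s₀ x' + 1/L) - Φ_σ(s₀ x')) / φ(Φ⁻¹(F̃ x'))` on the ball, then `Φ⁻¹ ∘ F̃` is
`K`-Lipschitz on `B(x, ρ)`. -/
theorem quantile_smoothed_locally_lipschitz (d : ℕ) (σ L ρ K : ℝ)
    (hσ : 0 < σ) (hL : 0 < L) (hρ : 0 < ρ) (hK : 0 ≤ K)
    (F : EuclideanSpace ℝ (Fin d) → ℝ)
    (hrange : ∀ z, F z ∈ Set.Icc (0 : ℝ) 1)
    (hlip : ∀ z z', |F z - F z'| ≤ L * ‖z - z'‖)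
    (x : EuclideanSpace ℝ (Fin d))
    (hx : ∀ x' ∈ Metric.closedBall x ρ, smoothed d σ F x' ∈ Set.Ioo (0 : ℝ) 1)
    (s₀ : EuclideanSpace ℝ (Fin d) → ℝ)
    (hs₀ : ∀ x' ∈ Metric.closedBall x ρ,
      smoothed d σ F x' = 1 - L * ∫ s in (s₀ x')..(s₀ x' + 1 / L), gaussCDF1 σ s)
    (hKbound : ∀ x' ∈ Metric.closedBall x ρ,
      L * (gaussCDF1 σ (s₀ x' + 1 / L) - gaussCDF1 σ (s₀ x'))
        / stdGaussPDF (stdGaussQuantile (smoothed d σ F x')) ≤ K) :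
    ∀ x' ∈ Metric.closedBall x ρ, ∀ x'' ∈ Metric.closedBall x ρ,
      |stdGaussQuantile (smoothed d σ F x') - stdGaussQuantile (smoothed d σ F x'')|
        ≤ K * ‖x' - x''‖ := by
  lift L to NNReal using hL.le
  lift K to NNReal using hK
  have hF : LipschitzWith L F := .of_dist_le_mul fun z z' ↦ by
    simpa only [dist_eq_norm, Real.norm_eq_abs] using hlip z z'
  have hmain := quantile_smoothed_locally_lipschitz_general hσ.ne' hL hF hrange
    (convex_closedBall x ρ).isPreconnected hs₀ hKbound
  intro x' hx' x'' hx''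
  simpa only [dist_eq_norm, Real.norm_eq_abs, Function.comp_apply]
    using hmain.dist_le_mul x' hx' x'' hx''
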